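/- arXiv:2011.10018 — 2 statements merged into one kernel-verified Lean document; each statement's English description precedes it below -/
import Mathlib

section
/- Let K be a field, n ≥ 1, and a = (a₀,…,a_{n−1}) ∈ Kⁿ such that the polynomial p_a(x) = xⁿ + a_{n−1}x^{n−1} + ⋯ + a₁x + a₀ is separable and irreducible over K. Then there exist a scheme V, an étale morphism f : V ⟶ 𝔸ⁿ_K of schemes over Spec K, and a K-point v : Spec K ⟶ V over Spec K, such that the K-point f ∘ v of 𝔸ⁿ_K corresponds to the tuple a, and for every K-point w : Spec K ⟶ V over Spec K, the tuple b ∈ Kⁿ corresponding to the K-point f ∘ w of 𝔸ⁿ_K satisfies: p_b is separable and irreducible over K, and the K-algebras K[x]/(p_b) and K[x]/(p_a) are isomorphic. -/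
open Polynomial AlgebraicGeometry CategoryTheory

universe u

/-!
Let `L = K[x]/(p_a)`, with a basis indexed by `Fin n`, and send `y ∈ L` to the non-leading
coefficients of the characteristic polynomial `χ` of multiplication by `y`. This is a morphism
`𝔸ⁿ → 𝔸ⁿ`. Differentiating the Cayley–Hamilton identity `χ(y) = 0` for the generic `y` with respect
to its `i`-th coordinate gives `∑ k, ∂ᵢχₖ • yᵏ = -χ'(y) * eᵢ`: the matrix of the powers of `y` times
the Jacobian matrix of the morphism is minus the matrix of multiplication by `χ'(y)`. On the locus
`V` where the norm of `χ'(y)` is invertible, both factors are therefore invertible. The Jacobian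
factor makes `V → 𝔸ⁿ` étale; the other one says that a `K`-point `y` of `V` generates `L`, so that
`χ` is the minimal polynomial of `y`. Hence the tuples `b` in the image of `V(K)` are exactly those
for which `p_b` is separable and irreducible with `K[x]/(p_b) ≅ L`.
-/

section EtaleCriterion

open KaehlerDifferential

theorem formallyEtale_of_bijective_mapBaseChange (R A B : Type*) [CommRing R] [CommRing A]
    [CommRing B] [Algebra R A] [Algebra A B] [Algebra R B] [IsScalarTower R A B]
    [Algebra.FormallySmooth R B] (h : Function.Bijective (mapBaseChange R A B)) :
    Algebra.FormallyEtale A B where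
  subsingleton_kaehlerDifferential := by
    refine subsingleton_of_forall_eq 0 fun x ↦ ?_
    obtain ⟨y, rfl⟩ := map_surjective R A B x
    exact (exact_mapBaseChange_map R A B y).mpr (h.2 y)
  subsingleton_h1Cotangent := by
    have hδ : Function.Injective (Algebra.H1Cotangent.δ R A B) := by
      rw [injective_iff_map_eq_zero]
      intro x hx
      obtain ⟨y, rfl⟩ := (Algebra.H1Cotangent.exact_map_δ R A B x).mp hx
      rw [Subsingleton.elim y 0, map_zero]
    refine subsingleton_of_forall_eq 0 fun x ↦ hδ (h.1 ?_)
    rw [(Algebra.H1Cotangent.exact_δ_mapBaseChange R A B).apply_apply_eq_zero, map_zero, map_zero]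

theorem formallyEtale_of_basis_kaehlerDifferential {R A B ι : Type*} [CommRing R] [CommRing A]
    [CommRing B] [Algebra R A] [Algebra A B] [Algebra R B] [IsScalarTower R A B]
    [Algebra.FormallySmooth R B] (b : Module.Basis ι A Ω[A⁄R]) (b' : Module.Basis ι B Ω[B⁄R])
    (h : ∀ i, map R R A B (b i) = b' i) : Algebra.FormallyEtale A B := by
  have hb : mapBaseChange R A B = ((b.baseChange B).equiv b' (Equiv.refl ι)).toLinearMap :=
    (b.baseChange B).ext fun i ↦ by
      rw [LinearEquiv.coe_coe, Module.Basis.equiv_apply, Equiv.refl_apply,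
        Module.Basis.baseChange_apply, mapBaseChange_tmul, one_smul, h]
  exact formallyEtale_of_bijective_mapBaseChange R A B (hb ▸ LinearEquiv.bijective _)

variable {R B ι : Type*} [CommRing R] [CommRing B] [Algebra R B]

theorem exists_basis_kaehlerDifferential_of_formallyEtale (φ : MvPolynomial ι R →ₐ[R] B)
    (hφ : φ.toRingHom.FormallyEtale) :
    ∃ b : Module.Basis ι B Ω[B⁄R], ∀ p i, b.repr (D R B (φ p)) i = φ (MvPolynomial.pderiv i p) := by
  algebraize [φ.toRingHom]
  have : IsScalarTower R (MvPolynomial ι R) B := .of_algebraMap_eq' φ.comp_algebraMap.symm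
  have hφ' (p) : φ p = algebraMap (MvPolynomial ι R) B p := rfl
  refine ⟨((mvPolynomialBasis R ι).baseChange B).map
    (tensorKaehlerEquivOfFormallyEtale R (MvPolynomial ι R) B), fun p i ↦ ?_⟩
  rw [hφ', Module.Basis.map_repr, LinearEquiv.trans_apply,
    tensorKaehlerEquivOfFormallyEtale_symm_D_algebraMap, Module.Basis.baseChange_repr_tmul,
    mvPolynomialBasis_repr_apply, hφ', Algebra.smul_def, mul_one]

theorem etale_of_basis_kaehlerDifferential [Finite ι] [Algebra.Smooth R B]
    (φ : MvPolynomial ι R →ₐ[R] B) (b : Module.Basis ι B Ω[B⁄R])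
    (hb : ∀ i, b i = D R B (φ (.X i))) : φ.toRingHom.Etale := by
  algebraize [φ.toRingHom]
  have : IsScalarTower R (MvPolynomial ι R) B := .of_algebraMap_eq' φ.comp_algebraMap.symm
  exact
    { formallyEtale := formallyEtale_of_basis_kaehlerDifferential (R := R)
        (mvPolynomialBasis R ι) b fun i ↦ by
          rw [mvPolynomialBasis_apply, map_D, hb]
          rfl
      finitePresentation := .of_restrict_scalars_finitePresentation R _ _ }

theorem etale_comp_aeval_of_isUnit_det [Fintype ι] [DecidableEq ι] (φ : MvPolynomial ι R →ₐ[R] B)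
    (hφ : φ.toRingHom.Etale) (c : ι → MvPolynomial ι R)
    (hc : IsUnit (φ (Matrix.of fun i j ↦ MvPolynomial.pderiv j (c i)).det)) :
    (φ.comp (MvPolynomial.aeval c)).toRingHom.Etale := by
  have : Algebra.Smooth R B := by
    algebraize [φ.toRingHom]
    have : IsScalarTower R (MvPolynomial ι R) B := .of_algebraMap_eq' φ.comp_algebraMap.symm
    have : Algebra.Smooth R (MvPolynomial ι R) := {}
    exact .comp R (MvPolynomial ι R) B
  obtain ⟨b, hb⟩ := exists_basis_kaehlerDifferential_of_formallyEtale φ hφ.formallyEtale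
  have hdet : b.det (fun i ↦ D R B (φ (c i))) =
      φ (Matrix.of fun i j ↦ MvPolynomial.pderiv j (c i)).det := by
    rw [b.det_apply, AlgHom.map_det, ← Matrix.det_transpose]
    congr 1
    ext i j
    exact hb (c i) j
  obtain ⟨hli, hspan⟩ := b.is_basis_iff_det.mpr (hdet ▸ hc)
  refine etale_of_basis_kaehlerDifferential _ (.mk hli hspan.ge) fun i ↦ ?_
  rw [Module.Basis.mk_apply, AlgHom.comp_apply, MvPolynomial.aeval_X]

end EtaleCriterion

section DifferentiatedCayleyHamilton

variable {R T ι : Type*} [CommRing R] [CommRing T] [Algebra R T] (d : Derivation R T T)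

theorem matrix_smul_map_derivation (c : T) (M : Matrix ι ι T) :
    (c • M).map d = d c • M + c • M.map d := by
  ext i j
  simp only [Matrix.map_apply, Matrix.smul_apply, Matrix.add_apply, Derivation.leibniz,
    smul_eq_mul, mul_comm, add_comm]

variable [Fintype ι]

theorem matrix_mul_map_derivation (M N : Matrix ι ι T) :
    (M * N).map d = M.map d * N + M * N.map d := by
  ext i j
  simp only [Matrix.map_apply, Matrix.mul_apply, Matrix.add_apply, map_sum, Derivation.leibniz,
    smul_eq_mul, Finset.sum_add_distrib, mul_comm, add_comm]

variable [DecidableEq ι] {M : Matrix ι ι T} (hM : Commute M (M.map d))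
include hM

theorem matrix_pow_map_derivation (k : ℕ) :
    (M ^ k).map d = aeval M (derivative (X ^ k : T[X])) * M.map d := by
  induction k with
  | zero =>
    ext i j
    by_cases h : i = j <;> simp [h]
  | succ k ih =>
    rw [pow_succ, matrix_mul_map_derivation, ih, pow_succ, derivative_mul, derivative_X, mul_one,
      map_add, map_mul, aeval_X, aeval_X_pow, add_mul, mul_assoc, mul_assoc, hM.eq]

theorem matrix_aeval_map_derivation (p : T[X]) :
    (aeval M p).map d = (p.sum fun k c ↦ d c • M ^ k) + aeval M (derivative p) * M.map d := by
  induction p using Polynomial.induction_on' with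
  | add p q hp hq =>
    rw [map_add, Matrix.map_add d (map_add d), hp, hq, derivative_add, map_add, add_mul,
      sum_add_index p q _ (by simp) (by simp [add_smul])]
    exact add_add_add_comm ..
  | monomial k c =>
    rw [← smul_X_eq_monomial, map_smul, aeval_X_pow, matrix_smul_map_derivation,
      matrix_pow_map_derivation d hM, smul_X_eq_monomial, sum_monomial_index _ _ (by simp),
      ← smul_X_eq_monomial, derivative_smul, map_smul, smul_mul_assoc]

theorem sum_derivation_charpoly_coeff_smul_pow :
    ∑ k : Fin (Fintype.card ι), d (M.charpoly.coeff k) • M ^ (k : ℕ) =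
      -(aeval M (derivative M.charpoly) * M.map d) := by
  nontriviality T
  have h := matrix_aeval_map_derivation d hM M.charpoly
  have hlead : M.charpoly.coeff (Fintype.card ι) = 1 :=
    M.charpoly_natDegree_eq_dim ▸ M.charpoly_monic
  rw [M.aeval_self_charpoly, Matrix.map_zero _ (map_zero d),
    sum_over_range' _ (by simp) (Fintype.card ι + 1) (by simp [M.charpoly_natDegree_eq_dim]),
    Finset.sum_range_succ, hlead, d.map_one_eq_zero, zero_smul, add_zero] at h
  rw [Fin.sum_univ_eq_sum_range (fun k ↦ d (M.charpoly.coeff k) • M ^ k)]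
  exact eq_neg_of_add_eq_zero_left h.symm

end DifferentiatedCayleyHamilton

section PowerBasis

theorem charpoly_leftMulMatrix_gen {R L ι : Type*} [CommRing R] [CommRing L] [Algebra R L]
    [Fintype ι] [DecidableEq ι] (e : Module.Basis ι R L) (pb : PowerBasis R L) :
    (Algebra.leftMulMatrix e pb.gen).charpoly = minpoly R pb.gen := by
  have := Module.Free.of_basis e
  have := Module.Finite.of_basis e
  rw [← charpoly_leftMulMatrix, Algebra.leftMulMatrix_apply, Algebra.leftMulMatrix_apply,
    LinearMap.charpoly_toMatrix, LinearMap.charpoly_toMatrix]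

theorem exists_powerBasis_gen_eq {R L : Type*} [CommRing R] [CommRing L] [Algebra R L] {n : ℕ}
    (e : Module.Basis (Fin n) R L) (x : L) (hx : IsUnit (e.det fun k ↦ x ^ (k : ℕ))) :
    ∃ pb : PowerBasis R L, pb.gen = x := by
  obtain ⟨hli, hspan⟩ := e.is_basis_iff_det.mpr hx
  exact ⟨⟨x, n, .mk hli hspan.ge, fun k ↦ Module.Basis.mk_apply ..⟩, rfl⟩

variable {K L : Type*} [Field K] [CommRing L] [Algebra K L]

theorem minpoly_separable_of_aeval_derivative_ne_zero [IsDomain L] {x : L}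
    (h : aeval x (derivative (minpoly K x)) ≠ 0) : (minpoly K x).Separable := by
  have hx : IsIntegral K x := by
    by_contra hx
    rw [minpoly.eq_zero hx, derivative_zero, map_zero] at h
    exact h rfl
  rw [separable_iff_derivative_ne_zero (minpoly.irreducible hx)]
  intro h0
  rw [h0, map_zero] at h
  exact h rfl

theorem exists_powerBasis_minpoly_eq {p : K[X]} (hp : p.Monic) (f : AdjoinRoot p ≃ₐ[K] L) :
    ∃ pb : PowerBasis K L, minpoly K pb.gen = p := by
  refine ⟨(AdjoinRoot.powerBasis' hp).map f, ?_⟩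
  rw [PowerBasis.map_gen, AdjoinRoot.powerBasis'_gen, minpoly.algEquiv_eq,
    AdjoinRoot.minpoly_root hp.ne_zero, hp.leadingCoeff, inv_one, C_1, mul_one]

theorem nonempty_adjoinRoot_minpoly_gen_equiv (pb : PowerBasis K L) :
    Nonempty (AdjoinRoot (minpoly K pb.gen) ≃ₐ[K] L) :=
  ⟨AdjoinRoot.equiv' _ pb (by simp) (by simp)⟩

end PowerBasis

section GenericElement

variable {R L ι : Type*} [CommRing R] [CommRing L] [Algebra R L] [Fintype ι] [DecidableEq ι]
  (e : Module.Basis ι R L)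

/-- The matrix, with respect to a basis `e` of `L`, of multiplication by the generic element
`∑ i, X i • e i` of `L`. -/
noncomputable def genericMulMatrix : Matrix ι ι (MvPolynomial ι R) :=
  ∑ i, MvPolynomial.X (R := R) i • (Algebra.leftMulMatrix e (e i)).map MvPolynomial.C

theorem genericMulMatrix_map_eval (y : ι → R) :
    (genericMulMatrix e).map (MvPolynomial.eval y) =
      Algebra.leftMulMatrix e (e.equivFun.symm y) := by
  ext j k
  simp [genericMulMatrix, Matrix.sum_apply, Module.Basis.equivFun_symm_apply]

theorem genericMulMatrix_map_pderiv (i : ι) :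
    (genericMulMatrix e).map (MvPolynomial.pderiv i) =
      (Algebra.leftMulMatrix e (e i)).map MvPolynomial.C := by
  ext j k
  simp [genericMulMatrix, Matrix.sum_apply, MvPolynomial.pderiv_X, Pi.single_apply]

theorem commute_genericMulMatrix (x : L) :
    Commute (genericMulMatrix e) ((Algebra.leftMulMatrix e x).map MvPolynomial.C) := by
  refine Commute.sum_left _ _ _ fun i _ ↦ Commute.smul_left ?_ _
  exact ((Commute.all (e i) x).map (Algebra.leftMulMatrix e)).map (MvPolynomial.C.mapMatrix)

/-- The norm of `χ'(y)`, where `χ` is the characteristic polynomial of the generic element `y`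
of `L`; its non-vanishing cuts out the separable generators of `L`. -/
noncomputable def genericDifferent : MvPolynomial ι R :=
  (aeval (genericMulMatrix e) (derivative (genericMulMatrix e).charpoly)).det

theorem charpoly_genericMulMatrix_map_eval (y : ι → R) :
    (genericMulMatrix e).charpoly.map (MvPolynomial.eval y) =
      (Algebra.leftMulMatrix e (e.equivFun.symm y)).charpoly := by
  rw [← genericMulMatrix_map_eval, Matrix.charpoly_map]

theorem eval_genericDifferent (y : ι → R) :
    MvPolynomial.eval y (genericDifferent e) =
      Algebra.norm R (aeval (e.equivFun.symm y)
        (derivative (Algebra.leftMulMatrix e (e.equivFun.symm y)).charpoly)) := by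
  have hmap : (algebraMap R (Matrix ι ι R)).comp (MvPolynomial.eval y) =
      (MvPolynomial.eval y).mapMatrix.comp (algebraMap _ _) := by
    refine RingHom.ext fun p ↦ Matrix.ext fun i j ↦ ?_
    by_cases h : i = j <;> simp [Matrix.algebraMap_matrix_apply, h]
  rw [Algebra.norm_eq_matrix_det e, ← aeval_algHom_apply, genericDifferent, RingHom.map_det,
    map_aeval_eq_aeval_map hmap, ← derivative_map, charpoly_genericMulMatrix_map_eval,
    RingHom.mapMatrix_apply, genericMulMatrix_map_eval]

end GenericElement

section CharpolyJacobian

variable {R L : Type*} [CommRing R] [CommRing L] [Algebra R L] {n : ℕ}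
  (e : Module.Basis (Fin n) R L)

/-- The matrix whose `k`-th column holds the coordinates of the `k`-th power of the generic
element of `L`, so that its determinant detects whether these powers form a basis. -/
noncomputable def genericPowersMatrix : Matrix (Fin n) (Fin n) (MvPolynomial (Fin n) R) :=
  .of fun i k ↦ (genericMulMatrix e ^ (k : ℕ)).mulVec (fun j ↦ .C (e.repr 1 j)) i

/-- The Jacobian matrix of the map sending an element of `L`, given by its coordinates, to the
non-leading coefficients of its characteristic polynomial. -/
noncomputable def charpolyJacobian : Matrix (Fin n) (Fin n) (MvPolynomial (Fin n) R) :=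
  .of fun k i ↦ MvPolynomial.pderiv i ((genericMulMatrix e).charpoly.coeff k)

theorem genericPowersMatrix_mul_charpolyJacobian :
    genericPowersMatrix e * charpolyJacobian e =
      -aeval (genericMulMatrix e) (derivative (genericMulMatrix e).charpoly) := by
  set M := genericMulMatrix e with hM
  set u : Fin n → MvPolynomial (Fin n) R := fun j ↦ .C (e.repr 1 j) with hu
  refine Matrix.ext fun j i ↦ ?_
  have hcomm : Commute M (M.map (MvPolynomial.pderiv i)) := by
    rw [genericMulMatrix_map_pderiv]
    exact commute_genericMulMatrix e (e i)
  have hcol : (M.map (MvPolynomial.pderiv i)).mulVec u = Pi.single i 1 := by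
    rw [genericMulMatrix_map_pderiv]
    funext k
    have hk := congrFun (Algebra.leftMulMatrix_mulVec_repr e (e i) 1) k
    rw [mul_one, e.repr_self] at hk
    refine (RingHom.map_mulVec MvPolynomial.C _ (e.repr 1) k).symm.trans ?_
    rw [hk, Finsupp.single_eq_pi_single, Pi.single_apply, Pi.single_apply, apply_ite MvPolynomial.C,
      map_one, map_zero]
  calc (genericPowersMatrix e * charpolyJacobian e) j i
      = (∑ k : Fin n, MvPolynomial.pderiv i (M.charpoly.coeff k) • M ^ (k : ℕ)).mulVec u j := by
        simp [Matrix.mul_apply, Matrix.sum_mulVec, Matrix.smul_mulVec, genericPowersMatrix,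
          charpolyJacobian, mul_comm, hM, hu]
    _ = (-(aeval M (derivative M.charpoly) * M.map (MvPolynomial.pderiv i))).mulVec u j := by
        have h := sum_derivation_charpoly_coeff_smul_pow _ hcomm
        rw [Fintype.card_fin] at h
        rw [h]
    _ = (-aeval M (derivative M.charpoly)) j i := by
        rw [Matrix.neg_mulVec, ← Matrix.mulVec_mulVec, hcol, Matrix.mulVec_single_one]
        rfl

theorem det_genericPowersMatrix_mul_det_charpolyJacobian :
    (genericPowersMatrix e).det * (charpolyJacobian e).det = (-1) ^ n * genericDifferent e := by
  rw [← Matrix.det_mul, genericPowersMatrix_mul_charpolyJacobian, Matrix.det_neg, Fintype.card_fin,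
    genericDifferent]

theorem eval_det_genericPowersMatrix (y : Fin n → R) :
    MvPolynomial.eval y (genericPowersMatrix e).det =
      e.det fun k ↦ e.equivFun.symm y ^ (k : ℕ) := by
  rw [e.det_apply, RingHom.map_det]
  congr 1
  ext i k
  have hpow : (genericMulMatrix e ^ (k : ℕ)).map (MvPolynomial.eval y) =
      Algebra.leftMulMatrix e (e.equivFun.symm y ^ (k : ℕ)) := by
    rw [map_pow, ← genericMulMatrix_map_eval, ← RingHom.mapMatrix_apply, map_pow,
      RingHom.mapMatrix_apply]
  have hone : MvPolynomial.eval y ∘ (fun j ↦ .C (e.repr 1 j)) = e.repr 1 := by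
    ext j
    simp
  refine (RingHom.map_mulVec (MvPolynomial.eval y) (genericMulMatrix e ^ (k : ℕ)) _ i).trans ?_
  rw [hpow, hone, Algebra.leftMulMatrix_mulVec_repr, mul_one, e.toMatrix_apply]

end CharpolyJacobian

section MonicOfCoeffs

variable {R : Type*} [Semiring R] {n : ℕ}

/-- The monic polynomial `p_b` of degree `n` with non-leading coefficients `b`. -/
noncomputable def monicOfCoeffs (b : Fin n → R) : R[X] :=
  X ^ n + ∑ j : Fin n, C (b j) * X ^ (j : ℕ)

theorem monicOfCoeffs_monic (b : Fin n → R) : (monicOfCoeffs b).Monic :=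
  monic_X_pow_add (degree_sum_fin_lt b)

theorem natDegree_monicOfCoeffs [Nontrivial R] (b : Fin n → R) :
    (monicOfCoeffs b).natDegree = n :=
  natDegree_eq_of_degree_eq_some <| by
    rw [monicOfCoeffs, degree_add_eq_left_of_degree_lt] <;> simp [degree_sum_fin_lt b]

theorem monicOfCoeffs_coeff (b : Fin n → R) (k : Fin n) : (monicOfCoeffs b).coeff k = b k := by
  simp [monicOfCoeffs, coeff_X_pow, k.2.ne, Fin.val_inj]

theorem monicOfCoeffs_injective : Function.Injective (monicOfCoeffs (R := R) (n := n)) :=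
  fun b c h ↦ funext fun k ↦ by rw [← monicOfCoeffs_coeff b, h, monicOfCoeffs_coeff]

theorem monicOfCoeffs_coeff_eq_self {p : R[X]} (hp : p.Monic) (hn : p.natDegree = n) :
    monicOfCoeffs (fun k : Fin n ↦ p.coeff k) = p := by
  subst hn
  rw [monicOfCoeffs, Fin.sum_univ_eq_sum_range fun k ↦ C (p.coeff k) * X ^ k]
  exact hp.as_sum.symm

end MonicOfCoeffs

section CharpolyMap

variable {R L : Type*} [CommRing R] [CommRing L] [Algebra R L] {n : ℕ}
  (e : Module.Basis (Fin n) R L)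

theorem monicOfCoeffs_eval_charpoly_coeff (y : Fin n → R) :
    monicOfCoeffs (fun k : Fin n ↦ MvPolynomial.eval y ((genericMulMatrix e).charpoly.coeff k)) =
      (Algebra.leftMulMatrix e (e.equivFun.symm y)).charpoly := by
  nontriviality R
  simp_rw [← coeff_map, charpoly_genericMulMatrix_map_eval]
  exact monicOfCoeffs_coeff_eq_self (Matrix.charpoly_monic _)
    ((Matrix.charpoly_natDegree_eq_dim _).trans (Fintype.card_fin n))

theorem exists_powerBasis_of_isUnit_eval_genericDifferent {y : Fin n → R}
    (hy : IsUnit (MvPolynomial.eval y (genericDifferent e))) :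
    ∃ pb : PowerBasis R L, pb.gen = e.equivFun.symm y := by
  refine exists_powerBasis_gen_eq e _ ?_
  have h := congrArg (MvPolynomial.eval y) (det_genericPowersMatrix_mul_det_charpolyJacobian e)
  rw [map_mul, map_mul, eval_det_genericPowersMatrix] at h
  exact isUnit_of_mul_isUnit_left (h ▸ ((isUnit_one.neg.pow n).map _).mul hy)

end CharpolyMap

section Points

variable {K L : Type*} [Field K] [CommRing L] [IsDomain L] [Algebra K L] {n : ℕ}
  (e : Module.Basis (Fin n) K L)

theorem isUnit_eval_genericDifferent_iff (y : Fin n → K) :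
    IsUnit (MvPolynomial.eval y (genericDifferent e)) ↔
      ∃ pb : PowerBasis K L, pb.gen = e.equivFun.symm y ∧ (minpoly K pb.gen).Separable := by
  have eval_gen {pb : PowerBasis K L} (hpb : pb.gen = e.equivFun.symm y) :
      IsUnit (MvPolynomial.eval y (genericDifferent e)) ↔
        aeval pb.gen (derivative (minpoly K pb.gen)) ≠ 0 := by
    rw [eval_genericDifferent, ← hpb, charpoly_leftMulMatrix_gen, isUnit_iff_ne_zero,
      Algebra.norm_ne_zero_iff_of_basis e]
  constructor
  · intro hy
    obtain ⟨pb, hpb⟩ := exists_powerBasis_of_isUnit_eval_genericDifferent e hy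
    exact ⟨pb, hpb, minpoly_separable_of_aeval_derivative_ne_zero ((eval_gen hpb).mp hy)⟩
  · rintro ⟨pb, hpb, hsep⟩
    exact (eval_gen hpb).mpr (hsep.aeval_derivative_ne_zero (minpoly.aeval K pb.gen))

theorem exists_isUnit_eval_genericDifferent_iff (b : Fin n → K) :
    (∃ y, IsUnit (MvPolynomial.eval y (genericDifferent e)) ∧
        ∀ k : Fin n, MvPolynomial.eval y ((genericMulMatrix e).charpoly.coeff k) = b k) ↔
      (monicOfCoeffs b).Separable ∧ Irreducible (monicOfCoeffs b) ∧
        Nonempty (AdjoinRoot (monicOfCoeffs b) ≃ₐ[K] L) := by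
  constructor
  · rintro ⟨y, hy, hb⟩
    obtain ⟨pb, hpb, hsep⟩ := (isUnit_eval_genericDifferent_iff e y).mp hy
    have hmin : monicOfCoeffs b = minpoly K pb.gen := by
      rw [← charpoly_leftMulMatrix_gen e, hpb, ← monicOfCoeffs_eval_charpoly_coeff, funext hb]
    rw [hmin]
    exact ⟨hsep, minpoly.irreducible pb.isIntegral_gen, nonempty_adjoinRoot_minpoly_gen_equiv pb⟩
  · rintro ⟨hsep, -, ⟨f⟩⟩
    obtain ⟨pb, hpb⟩ := exists_powerBasis_minpoly_eq (monicOfCoeffs_monic b) f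
    have hgen : pb.gen = e.equivFun.symm (e.equivFun pb.gen) := (e.equivFun.symm_apply_apply _).symm
    refine ⟨e.equivFun pb.gen,
      (isUnit_eval_genericDifferent_iff e _).mpr ⟨pb, hgen, hpb ▸ hsep⟩, congrFun ?_⟩
    apply monicOfCoeffs_injective
    rw [monicOfCoeffs_eval_charpoly_coeff, ← hgen, charpoly_leftMulMatrix_gen, hpb]

end Points

section EtaleAlgebra

theorem exists_algHom_localizationAway_comp_eq_aeval_iff {R σ ι : Type*} [CommRing R]
    (g : MvPolynomial ι R) (c : σ → MvPolynomial ι R) (b : σ → R) :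
    (∃ φ : Localization.Away g →ₐ[R] R,
        φ.comp ((IsScalarTower.toAlgHom R (MvPolynomial ι R) (Localization.Away g)).comp
          (MvPolynomial.aeval c)) = MvPolynomial.aeval b) ↔
      ∃ y, IsUnit (MvPolynomial.eval y g) ∧ ∀ i, MvPolynomial.eval y (c i) = b i := by
  constructor
  · rintro ⟨φ, hφ⟩
    obtain ⟨y, hy⟩ : ∃ y, φ.comp (IsScalarTower.toAlgHom R (MvPolynomial ι R) _) =
        MvPolynomial.aeval y := ⟨_, MvPolynomial.aeval_unique _⟩
    have hy' (p) : φ (algebraMap _ _ p) = MvPolynomial.eval y p := DFunLike.congr_fun hy p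
    refine ⟨y, hy' g ▸ (IsLocalization.Away.algebraMap_isUnit g).map φ, fun i ↦ ?_⟩
    simpa [hy'] using DFunLike.congr_fun hφ (MvPolynomial.X i)
  · rintro ⟨y, hy, hc⟩
    have hy' : IsUnit (MvPolynomial.aeval y g) := hy
    refine ⟨IsLocalization.Away.liftAlgHom g hy', MvPolynomial.algHom_ext fun i ↦ ?_⟩
    simp [MvPolynomial.coe_aeval_eq_eval, hc]

theorem etale_aeval_charpoly_coeff {R L : Type*} [CommRing R] [CommRing L] [Algebra R L]
    {n : ℕ} (e : Module.Basis (Fin n) R L) :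
    ((IsScalarTower.toAlgHom R (MvPolynomial (Fin n) R)
      (Localization.Away (genericDifferent e))).comp
        (MvPolynomial.aeval fun k : Fin n ↦
          (genericMulMatrix e).charpoly.coeff k)).toRingHom.Etale := by
  refine etale_comp_aeval_of_isUnit_det _ ?_ _ ?_
  · exact RingHom.etale_algebraMap.mpr (.of_isLocalizationAway (genericDifferent e))
  · have h := congrArg (algebraMap _ (Localization.Away (genericDifferent e)))
      (det_genericPowersMatrix_mul_det_charpolyJacobian e)
    rw [map_mul, map_mul] at h
    exact isUnit_of_mul_isUnit_right (h ▸ ((isUnit_one.neg.pow n).map _).mul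
      (IsLocalization.Away.algebraMap_isUnit _))

theorem exists_etale_algebra_points_iff {K : Type u} {L : Type*} [Field K] [CommRing L]
    [IsDomain L] [Algebra K L] {n : ℕ} (e : Module.Basis (Fin n) K L) :
    ∃ (B : Type u) (_ : CommRing B) (_ : Algebra K B) (ψ : MvPolynomial (Fin n) K →ₐ[K] B),
      ψ.toRingHom.Etale ∧ ∀ b : Fin n → K,
        (∃ φ : B →ₐ[K] K, φ.comp ψ = MvPolynomial.aeval b) ↔
          (monicOfCoeffs b).Separable ∧ Irreducible (monicOfCoeffs b) ∧
            Nonempty (AdjoinRoot (monicOfCoeffs b) ≃ₐ[K] L) :=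
  ⟨Localization.Away (genericDifferent e), inferInstance, inferInstance, _,
    etale_aeval_charpoly_coeff e, fun b ↦
      (exists_algHom_localizationAway_comp_eq_aeval_iff _ _ b).trans
        (exists_isUnit_eval_genericDifferent_iff e b)⟩

end EtaleAlgebra

section AffineSchemes

theorem exists_comp_Spec_map_eq_iff {R A B : Type u} [CommRing R] [CommRing A] [CommRing B]
    [Algebra R A] [Algebra R B] (ψ : A →ₐ[R] B) (x : A →ₐ[R] R) :
    (∃ w : Spec (.of R) ⟶ Spec (.of B),
        w ≫ Spec.map (CommRingCat.ofHom ψ.toRingHom) =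
          Spec.map (CommRingCat.ofHom x.toRingHom)) ↔
      ∃ φ : B →ₐ[R] R, φ.comp ψ = x := by
  constructor
  · rintro ⟨w, hw⟩
    obtain ⟨φ, rfl⟩ := Spec.map_surjective w
    rw [← Spec.map_comp] at hw
    have hφ : φ.hom.comp ψ.toRingHom = x.toRingHom :=
      congrArg CommRingCat.Hom.hom (Spec.map_injective hw)
    refine ⟨{ φ.hom with commutes' r := ?_ }, AlgHom.ext fun p ↦ DFunLike.congr_fun hφ p⟩
    rw [← ψ.commutes, ← x.commutes]
    exact DFunLike.congr_fun hφ _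
  · rintro ⟨φ, rfl⟩
    exact ⟨Spec.map (CommRingCat.ofHom φ.toRingHom), (Spec.map_comp ..).symm⟩

theorem Spec_map_comp_Spec_map_algebraMap {R A : Type u} [CommRing R] [CommRing A] [Algebra R A]
    (x : A →ₐ[R] R) :
    Spec.map (CommRingCat.ofHom x.toRingHom) ≫ Spec.map (CommRingCat.ofHom (algebraMap R A)) =
      𝟙 (Spec (.of R)) := by
  rw [← Spec.map_comp, ← CommRingCat.ofHom_comp]
  exact (congrArg (fun f ↦ Spec.map (CommRingCat.ofHom f)) x.comp_algebraMap).trans (Spec.map_id _)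

end AffineSchemes

/-- Theorem 4.3 (Krasner-type theorem): if `p_a(x) = xⁿ + a_{n−1}x^{n−1} + ⋯ + a₀`
is separable and irreducible over `K`, then there are a scheme `V` over `Spec K`,
an étale morphism `f : V ⟶ 𝔸ⁿ_K` over `Spec K` (where `𝔸ⁿ_K = Spec K[x₁,…,xₙ]`),
and a `K`-point `v` of `V` such that `f ∘ v` is the `K`-point of `𝔸ⁿ_K`
corresponding to `a`, and for every `K`-point `w` of `V`, the tuple `b`
corresponding to `f ∘ w` is such that `p_b` is separable and irreducible and
`K[x]/(p_b) ≅ K[x]/(p_a)` as `K`-algebras. -/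
theorem stmt_14 {K : Type u} [Field K] (n : ℕ) (hn : 1 ≤ n) (a : Fin n → K)
    (pa : K[X]) (hpa : pa = X ^ n + ∑ j : Fin n, C (a j) * X ^ (j : ℕ))
    (hsep : pa.Separable) (hirr : Irreducible pa) :
    ∃ (V : Scheme.{u}) (sV : V ⟶ Spec (CommRingCat.of K))
      (f : V ⟶ Spec (CommRingCat.of (MvPolynomial (Fin n) K)))
      (_ : IsEtale f)
      (_ : f ≫ Spec.map (CommRingCat.ofHom (algebraMap K (MvPolynomial (Fin n) K))) = sV)
      (v : Spec (CommRingCat.of K) ⟶ V),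
      v ≫ sV = 𝟙 (Spec (CommRingCat.of K)) ∧
      v ≫ f = Spec.map (CommRingCat.ofHom (MvPolynomial.aeval a).toRingHom) ∧
      ∀ w : Spec (CommRingCat.of K) ⟶ V, w ≫ sV = 𝟙 (Spec (CommRingCat.of K)) →
        ∀ b : Fin n → K,
          w ≫ f = Spec.map (CommRingCat.ofHom (MvPolynomial.aeval b).toRingHom) →
          (X ^ n + ∑ j : Fin n, C (b j) * X ^ (j : ℕ) : K[X]).Separable ∧
          Irreducible (X ^ n + ∑ j : Fin n, C (b j) * X ^ (j : ℕ) : K[X]) ∧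
          Nonempty
            (AdjoinRoot (X ^ n + ∑ j : Fin n, C (b j) * X ^ (j : ℕ) : K[X]) ≃ₐ[K]
              AdjoinRoot pa) := by
  obtain rfl : pa = monicOfCoeffs a := hpa
  have : Fact (Irreducible (monicOfCoeffs a)) := ⟨hirr⟩
  obtain ⟨B, _, _, ψ, hψ, hpoints⟩ := exists_etale_algebra_points_iff
    ((AdjoinRoot.powerBasis' (monicOfCoeffs_monic a)).basis.reindex
      (finCongr (natDegree_monicOfCoeffs a)))
  obtain ⟨v, hv⟩ := (exists_comp_Spec_map_eq_iff ψ (MvPolynomial.aeval a)).mpr <|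
    (hpoints a).mpr <| ⟨hsep, hirr, ⟨.refl⟩⟩
  refine ⟨Spec (.of B), _, Spec.map (CommRingCat.ofHom ψ.toRingHom),
    (HasRingHomProperty.Spec_iff (P := @Etale)).mpr hψ, rfl, v, ?_, hv, fun w _ b hw ↦ ?_⟩
  · rw [← Category.assoc, hv, Spec_map_comp_Spec_map_algebraMap]
  · exact (hpoints b).mp ((exists_comp_Spec_map_eq_iff ψ _).mp ⟨w, hw⟩)
end

section
/- Let K be a field with the following property: for every irreducible reduced separated finite-type K-scheme W, if W admits a K-point whose image lies in an open subscheme of W that is smooth over K, then the set of images in the topological space of W of the K-points of W is topologically dense in W. Let W be a smooth, irreducible, separated, finite-type K-scheme, let V be a scheme over K, and let f : V ⟶ W be an étale morphism over Spec K such that V admits a K-point. Then the set of images in the topological space of W of the K-points f ∘ x, as x ranges over the K-points of V, is topologically dense in W. -/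
open AlgebraicGeometry CategoryTheory

universe u

/-!
Openness of `f` reduces the theorem to showing that the closure of `V(K)` is a neighbourhood of each
`K`-point `x` of `V`. Once `x` has an integral open neighbourhood `U`, largeness of `K` applied to
`U` gives this, so what matters is that the local ring `A` of `V` at `x` is a domain. The point
makes `A` an augmented formally smooth algebra with augmentation ideal `I`; a polynomial ring `P` on
generators of `I` surjects onto `A`, and formal smoothness provides sections of
`P / (X)ⁿ → A / Iⁿ` over `A`, through which the additivity of the order of vanishing of polynomials
passes to `A`. Krull's intersection theorem then excludes zero divisors.
-/

theorem dense_image_of_isOpenMap_of_interior_closure_nonempty {X Y : Type*} [TopologicalSpace X]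
    [TopologicalSpace Y] [PreirreducibleSpace Y] {f : X → Y} (hf : IsOpenMap f)
    (hfc : Continuous f) {s : Set X} (hs : (interior (closure s)).Nonempty) : Dense (f '' s) := by
  have hdense : Dense (f '' interior (closure s)) :=
    (hf _ isOpen_interior).dense (hs.image f)
  refine dense_closure.mp (hdense.mono ?_)
  exact (Set.image_mono interior_subset).trans (image_closure_subset_closure_image hfc)

section OrderOfVanishing

open MvPolynomial

theorem mem_pow_idealOfVars_iff_le_order {σ R : Type*} [CommSemiring R] {n : ℕ}
    {p : MvPolynomial σ R} :
    p ∈ idealOfVars σ R ^ n ↔ n ≤ (p : MvPowerSeries σ R).order := by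
  rw [mem_pow_idealOfVars_iff']
  refine ⟨fun h ↦ MvPowerSeries.nat_le_order fun d hd ↦ ?_, fun h d hd ↦ ?_⟩
  · simpa only [coeff_coe] using h d hd
  · simpa only [coeff_coe] using
      MvPowerSeries.coeff_of_lt_order (lt_of_lt_of_le (Nat.cast_lt.mpr hd) h)

theorem mem_pow_idealOfVars_or_mem_of_mul_mem {σ R : Type*} [CommSemiring R] [NoZeroDivisors R]
    {m n : ℕ} {p q : MvPolynomial σ R} (h : p * q ∈ idealOfVars σ R ^ (m + n)) :
    p ∈ idealOfVars σ R ^ m ∨ q ∈ idealOfVars σ R ^ n := by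
  simp only [mem_pow_idealOfVars_iff_le_order, coe_mul, MvPowerSeries.order_mul,
    Nat.cast_add] at h ⊢
  contrapose! h
  exact ENat.add_lt_add h.1 h.2

theorem ker_aeval_zero_eq_idealOfVars (σ R : Type*) [CommRing R] :
    RingHom.ker (aeval (fun _ : σ ↦ (0 : R))) = idealOfVars σ R := by
  ext p
  rw [← pow_one (idealOfVars σ R), mem_pow_idealOfVars_iff_le_order, Nat.cast_one,
    MvPowerSeries.one_le_order_iff_constCoeff_eq_zero, RingHom.mem_ker]
  simp [aeval_zero', ← MvPowerSeries.coeff_zero_eq_constantCoeff_apply, constantCoeff_eq]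

end OrderOfVanishing

section Augmentation

variable {R A : Type*} [CommRing R] [CommRing A] [Algebra R A]

theorem exists_mvPolynomial_surjective_of_augmentation (ε : A →ₐ[R] R) :
    ∃ φ : MvPolynomial (RingHom.ker ε) R →ₐ[R] A, Function.Surjective φ ∧
      ε.comp φ = MvPolynomial.aeval (fun _ ↦ 0) := by
  refine ⟨MvPolynomial.aeval Subtype.val, fun a ↦ ?_, ?_⟩
  · have ha : a - algebraMap R A (ε a) ∈ RingHom.ker ε := by simp [RingHom.mem_ker]
    exact ⟨.X ⟨_, ha⟩ + .C (ε a), by simp⟩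
  · ext ⟨x, hx⟩
    simpa using hx

theorem isNilpotent_ker_quotientMap_pow {P : Type*} [CommRing P] (φ : P →+* A)
    (hφ : Function.Surjective φ) {M : Ideal P} (hM : RingHom.ker φ ≤ M) (n : ℕ) :
    IsNilpotent (RingHom.ker
      (Ideal.quotientMap ((M ^ n).map φ) φ (Ideal.le_comap_map (I := M ^ n)))) := by
  refine ⟨n, le_bot_iff.mp ?_⟩
  suffices hker : RingHom.ker (Ideal.quotientMap ((M ^ n).map φ) φ Ideal.le_comap_map) ≤
      M.map (Ideal.Quotient.mk (M ^ n)) by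
    calc _ ≤ M.map (Ideal.Quotient.mk (M ^ n)) ^ n := Ideal.pow_right_mono hker n
      _ = ⊥ := by rw [← Ideal.map_pow, Ideal.map_quotient_self]
  intro y hy
  obtain ⟨p, rfl⟩ := Ideal.Quotient.mk_surjective y
  have hp : p ∈ M ^ n ⊔ RingHom.ker φ := by
    rw [← Ideal.comap_map_of_surjective' φ hφ, Ideal.mem_comap]
    rwa [RingHom.mem_ker, Ideal.quotientMap_mk, Ideal.Quotient.eq_zero_iff_mem] at hy
  have hmap := Ideal.mem_map_of_mem (Ideal.Quotient.mk (M ^ n)) hp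
  rw [Ideal.map_sup, Ideal.map_quotient_self, bot_sup_eq] at hmap
  exact Ideal.map_mono hM hmap

variable [Algebra.FormallySmooth R A] {P : Type*} [CommRing P] [Algebra R P]

theorem exists_algHom_quotient_pow_of_surjective (φ : P →ₐ[R] A) (hφ : Function.Surjective φ)
    {M : Ideal P} (hM : RingHom.ker φ ≤ M) (n : ℕ) :
    ∃ s : A →ₐ[R] P ⧸ M ^ n, ∀ a p, Ideal.Quotient.mk (M ^ n) p = s a → φ p - a ∈ M.map φ ^ n := by
  let g : P ⧸ M ^ n →ₐ[R] A ⧸ (M ^ n).map φ :=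
    Ideal.quotientMapₐ ((M ^ n).map φ) φ Ideal.le_comap_map
  have hg : Function.Surjective g := Ideal.quotientMap_surjective (H := Ideal.le_comap_map) hφ
  have hnil : IsNilpotent (RingHom.ker g) := isNilpotent_ker_quotientMap_pow φ.toRingHom hφ hM n
  let s := Algebra.FormallySmooth.liftOfSurjective (Ideal.Quotient.mkₐ R _) g hg hnil
  refine ⟨s, fun a p hp ↦ ?_⟩
  have hs : g (s a) = Ideal.Quotient.mk _ a :=
    Algebra.FormallySmooth.liftOfSurjective_apply _ g hg hnil a
  rw [← Ideal.map_pow, ← Ideal.Quotient.eq]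
  rwa [← hp] at hs

theorem exists_algHom_quotient_pow_comap_map_pow_eq (φ : P →ₐ[R] A) (hφ : Function.Surjective φ)
    {M : Ideal P} (hM : RingHom.ker φ ≤ M) (n : ℕ) :
    ∃ s : A →ₐ[R] P ⧸ M ^ n, ∀ k ≤ n,
      ((M ^ k).map (Ideal.Quotient.mk (M ^ n))).comap s = M.map φ ^ k := by
  obtain ⟨s, hs⟩ := exists_algHom_quotient_pow_of_surjective φ hφ hM n
  refine ⟨s, fun k hk ↦ le_antisymm (fun a ha ↦ ?_) ?_⟩
  · obtain ⟨p, hp⟩ := Ideal.Quotient.mk_surjective (s a)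
    rw [Ideal.mem_comap, ← hp, Ideal.mem_quotient_iff_mem (Ideal.pow_le_pow_right hk)] at ha
    have hφp : φ p ∈ M.map φ ^ k := Ideal.map_pow φ M k ▸ Ideal.mem_map_of_mem φ ha
    exact (Submodule.sub_mem_iff_right _ hφp).mp (Ideal.pow_le_pow_right hk (hs a p hp))
  · rcases eq_or_ne k 0 with rfl | hk0
    · simp [Ideal.map_top]
    suffices hmap : (M.map φ).map s ≤ M.map (Ideal.Quotient.mk (M ^ n)) by
      rw [← Ideal.map_le_iff_le_comap, Ideal.map_pow, Ideal.map_pow]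
      exact Ideal.pow_right_mono hmap k
    rw [Ideal.map_le_iff_le_comap]
    intro a ha
    obtain ⟨p, hp⟩ := Ideal.Quotient.mk_surjective (s a)
    have hφp : φ p ∈ M.map φ :=
      (Submodule.sub_mem_iff_left _ ha).mp (Ideal.pow_le_self (by lia) (hs a p hp))
    rw [← Ideal.mem_comap, Ideal.comap_map_of_surjective' φ hφ, sup_of_le_left hM] at hφp
    exact Ideal.mem_comap.mpr (hp ▸ Ideal.mem_map_of_mem _ hφp)

theorem mem_map_pow_or_mem_of_mul_mem (φ : P →ₐ[R] A) (hφ : Function.Surjective φ)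
    {M : Ideal P} (hM : RingHom.ker φ ≤ M) {m n : ℕ}
    (hmul : ∀ p q, p * q ∈ M ^ (m + n) → p ∈ M ^ m ∨ q ∈ M ^ n)
    {a b : A} (h : a * b ∈ M.map φ ^ (m + n)) : a ∈ M.map φ ^ m ∨ b ∈ M.map φ ^ n := by
  obtain ⟨s, hs⟩ := exists_algHom_quotient_pow_comap_map_pow_eq φ hφ hM (m + n)
  have mem_iff {c : A} {r : P} (hr : Ideal.Quotient.mk (M ^ (m + n)) r = s c) {k : ℕ}
      (hk : k ≤ m + n) : c ∈ M.map φ ^ k ↔ r ∈ M ^ k := by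
    rw [← hs k hk, Ideal.mem_comap, ← hr, Ideal.mem_quotient_iff_mem (Ideal.pow_le_pow_right hk)]
  obtain ⟨p, hp⟩ := Ideal.Quotient.mk_surjective (s a)
  obtain ⟨q, hq⟩ := Ideal.Quotient.mk_surjective (s b)
  have hpq : Ideal.Quotient.mk (M ^ (m + n)) (p * q) = s (a * b) := by rw [map_mul, map_mul, hp, hq]
  rw [mem_iff hp (Nat.le_add_right m n), mem_iff hq (Nat.le_add_left n m)]
  exact hmul p q ((mem_iff hpq le_rfl).mp h)

theorem mem_ker_pow_or_mem_of_mul_mem [NoZeroDivisors R] (ε : A →ₐ[R] R) {m n : ℕ} {a b : A}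
    (h : a * b ∈ RingHom.ker ε ^ (m + n)) :
    a ∈ RingHom.ker ε ^ m ∨ b ∈ RingHom.ker ε ^ n := by
  obtain ⟨φ, hφ, hεφ⟩ := exists_mvPolynomial_surjective_of_augmentation ε
  have hcomap : MvPolynomial.idealOfVars (RingHom.ker ε) R = (RingHom.ker ε).comap φ := by
    rw [← ker_aeval_zero_eq_idealOfVars, ← hεφ]
    rfl
  have hker : RingHom.ker φ ≤ MvPolynomial.idealOfVars (RingHom.ker ε) R :=
    hcomap ▸ Ideal.comap_mono bot_le
  have hmap : (MvPolynomial.idealOfVars (RingHom.ker ε) R).map φ = RingHom.ker ε := by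
    rw [hcomap, Ideal.map_comap_of_surjective φ hφ]
  simpa only [hmap] using mem_map_pow_or_mem_of_mul_mem φ hφ hker
    (fun _ _ ↦ mem_pow_idealOfVars_or_mem_of_mul_mem) (hmap.symm ▸ h)

theorem isDomain_of_formallySmooth_of_iInf_ker_pow_eq_bot [IsDomain R]
    (ε : A →ₐ[R] R) (hε : ⨅ n : ℕ, RingHom.ker ε ^ n = ⊥) : IsDomain A := by
  have : Nontrivial A := ε.toRingHom.domain_nontrivial
  have : NoZeroDivisors A := by
    refine ⟨fun {a b} hab ↦ ?_⟩
    simp only [← Ideal.mem_bot, ← hε, Ideal.mem_iInf]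
    by_contra! ⟨⟨m, ha⟩, ⟨n, hb⟩⟩
    exact (mem_ker_pow_or_mem_of_mul_mem ε (hab ▸ zero_mem _)).elim ha hb
  exact NoZeroDivisors.to_isDomain A

end Augmentation

section Stalk

theorem isDomain_stalk_of_section {X S : Scheme.{u}} (f : X ⟶ S) [Smooth f] (x : S ⟶ X)
    (hx : x ≫ f = 𝟙 S) (s : S) [IsDomain (S.presheaf.stalk s)]
    [IsNoetherianRing (X.presheaf.stalk (x s))] : IsDomain (X.presheaf.stalk (x s)) := by
  have : IsIso (x ≫ f) := hx ▸ inferInstance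
  let e := asIso ((x ≫ f).stalkMap s)
  have hdom : IsDomain (S.presheaf.stalk (f (x s))) :=
    e.commRingCatIsoToRingEquiv.toMulEquiv.isDomain _
  have hsm : (f.stalkMap (x s)).hom.FormallySmooth :=
    (Scheme.Hom.smoothLocus_eq_top f).ge (Set.mem_univ (x s))
  algebraize [(f.stalkMap (x s)).hom]
  have hcomp : f.stalkMap (x s) ≫ x.stalkMap s ≫ e.inv = 𝟙 _ := by
    rw [← Category.assoc, ← Scheme.Hom.stalkMap_comp]
    exact e.hom_inv_id
  let ε : X.presheaf.stalk (x s) →ₐ[S.presheaf.stalk (f (x s))] S.presheaf.stalk (f (x s)) :=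
    { (x.stalkMap s ≫ e.inv).hom with commutes' := fun r ↦ congr($hcomp r) }
  exact isDomain_of_formallySmooth_of_iInf_ker_pow_eq_bot ε
    (Ideal.iInf_pow_eq_bot_of_isLocalRing _ (RingHom.ker_ne_top ε))

theorem exists_isIntegral_opens_of_isDomain_stalk (X : Scheme.{u}) (x : X) [X.IsGermInjectiveAt x]
    [IsDomain (X.presheaf.stalk x)] :
    ∃ U : X.Opens, x ∈ U ∧ IsAffineOpen U ∧ IsIntegral U := by
  obtain ⟨U, hxU, hU, hinj⟩ := X.exists_germ_injective x
  have : IsAffine U := hU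
  have : Nonempty U := ⟨⟨x, hxU⟩⟩
  have : IsDomain Γ(X, U) := Function.Injective.isDomain (X.presheaf.germ U x hxU).hom hinj
  have : IsDomain Γ(U, ⊤) := U.topIso.commRingCatIsoToRingEquiv.toMulEquiv.isDomain _
  exact ⟨U, hxU, hU, isIntegral_of_isAffine_of_isDomain _⟩

end Stalk

/-- The set `V(K)` of `K`-points of a `K`-scheme `V`, seen inside the topological space of `V`. -/
def rationalPoints {K : Type u} [Field K] {V : Scheme.{u}} (sV : V ⟶ Spec (CommRingCat.of K)) :
    Set V :=
  {v | ∃ x : Spec (CommRingCat.of K) ⟶ V, x ≫ sV = 𝟙 (Spec (CommRingCat.of K)) ∧ ∃ z, x z = v}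

/-- Largeness of a field in Pop's sense: the `K`-points of a `K`-variety with a smooth `K`-point are
Zariski dense. Smoothness of the point is encoded by an open neighbourhood `U` smooth over `K`. -/
def IsLargeField (K : Type u) [Field K] : Prop :=
  ∀ (W : Scheme.{u}) (sW : W ⟶ Spec (CommRingCat.of K)),
    IrreducibleSpace W → IsReduced W → IsSeparated sW → LocallyOfFiniteType sW → QuasiCompact sW →
    (∃ (x : Spec (CommRingCat.of K) ⟶ W) (U : W.Opens),
      x ≫ sW = 𝟙 (Spec (CommRingCat.of K)) ∧ Smooth (U.ι ≫ sW) ∧ Set.range x ⊆ U) →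
    Dense (rationalPoints sW)

section RationalPoints

variable {K : Type u} [Field K]

theorem rationalPoints_ι_comp {V : Scheme.{u}} (sV : V ⟶ Spec (CommRingCat.of K)) (U : V.Opens) :
    rationalPoints (U.ι ≫ sV) = U.ι ⁻¹' rationalPoints sV := by
  have : Subsingleton (Spec (CommRingCat.of K)) :=
    inferInstanceAs (Subsingleton (PrimeSpectrum K))
  ext u
  constructor
  · rintro ⟨x, hx, z, rfl⟩
    exact ⟨x ≫ U.ι, by simpa using hx, z, by simp⟩
  · rintro ⟨x, hx, z, hz⟩
    have hxU : Set.range x ⊆ Set.range U.ι := by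
      rintro _ ⟨z', rfl⟩
      rw [Subsingleton.elim z' z, hz]
      exact ⟨u, rfl⟩
    refine ⟨IsOpenImmersion.lift U.ι x hxU, by simp [hx], z, U.ι.injective ?_⟩
    rw [← Scheme.Hom.comp_apply, IsOpenImmersion.lift_fac, hz]

theorem IsLargeField.dense_rationalPoints (hK : IsLargeField K) {V : Scheme.{u}}
    [IsIntegral V] (sV : V ⟶ Spec (CommRingCat.of K)) [Smooth sV] [IsSeparated sV] [QuasiCompact sV]
    (hne : (rationalPoints sV).Nonempty) : Dense (rationalPoints sV) := by
  obtain ⟨_, x, hx, -⟩ := hne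
  exact hK V sV inferInstance inferInstance inferInstance inferInstance inferInstance
    ⟨x, ⊤, hx, inferInstance, by simp⟩

theorem IsLargeField.rationalPoints_subset_interior_closure (hK : IsLargeField K) {V : Scheme.{u}}
    (sV : V ⟶ Spec (CommRingCat.of K)) [Smooth sV] :
    rationalPoints sV ⊆ interior (closure (rationalPoints sV)) := by
  rintro v ⟨x, hx, z, rfl⟩
  have : IsLocallyNoetherian V := LocallyOfFiniteType.isLocallyNoetherian sV
  have : IsDomain (V.presheaf.stalk (x z)) := isDomain_stalk_of_section sV x hx z
  obtain ⟨U, hxU, hU, hUint⟩ := exists_isIntegral_opens_of_isDomain_stalk V (x z)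
  have : IsAffine U := hU
  have hdense : Dense (U.ι ⁻¹' rationalPoints sV) := by
    rw [← rationalPoints_ι_comp]
    refine hK.dense_rationalPoints _ ?_
    rw [rationalPoints_ι_comp]
    exact ⟨⟨x z, hxU⟩, x, hx, z, rfl⟩
  refine mem_interior.mpr ⟨U, fun v hv ↦ ?_, U.isOpen, hxU⟩
  exact map_mem_closure U.ι.continuous (hdense ⟨v, hv⟩) fun _ h ↦ h

theorem image_rationalPoints {V W : Scheme.{u}} (sV : V ⟶ Spec (CommRingCat.of K)) (f : V ⟶ W) :
    f '' rationalPoints sV = {w | ∃ x : Spec (CommRingCat.of K) ⟶ V,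
      x ≫ sV = 𝟙 (Spec (CommRingCat.of K)) ∧ ∃ z, (x ≫ f) z = w} := by
  ext w
  constructor
  · rintro ⟨_, ⟨x, hx, z, rfl⟩, rfl⟩
    exact ⟨x, hx, z, Scheme.Hom.comp_apply x f z⟩
  · rintro ⟨x, hx, z, rfl⟩
    exact ⟨x z, ⟨x, hx, z, rfl⟩, (Scheme.Hom.comp_apply x f z).symm⟩

theorem stmt_15_general (hK : IsLargeField K) {V W : Scheme.{u}} [PreirreducibleSpace W]
    (sV : V ⟶ Spec (CommRingCat.of K)) [Smooth sV] (f : V ⟶ W) (hf : IsOpenMap f)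
    (hVpt : ∃ x : Spec (CommRingCat.of K) ⟶ V, x ≫ sV = 𝟙 (Spec (CommRingCat.of K))) :
    Dense {w | ∃ x : Spec (CommRingCat.of K) ⟶ V,
      x ≫ sV = 𝟙 (Spec (CommRingCat.of K)) ∧ ∃ z, (x ≫ f) z = w} := by
  obtain ⟨x, hx⟩ := hVpt
  have hne : (rationalPoints sV).Nonempty := ⟨_, x, hx, default, rfl⟩
  rw [← image_rationalPoints]
  exact dense_image_of_isOpenMap_of_interior_closure_nonempty hf f.continuous
    (hne.mono (hK.rationalPoints_subset_interior_closure sV))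

end RationalPoints

/-- Lemma 2.5: suppose `K` is large, in Pop's sense that for every irreducible
reduced separated finite-type `K`-scheme `W`, if `W` has a `K`-point landing in
a `K`-smooth open subscheme, then the `K`-points of `W` are topologically dense.
Then for every smooth irreducible separated finite-type `K`-scheme `W`, every
étale morphism `f : V ⟶ W` over `Spec K` from a `K`-scheme `V` with a `K`-point
has topologically dense image of `K`-points. -/
theorem stmt_15 {K : Type u} [Field K]
    (hlarge : ∀ (W : Scheme.{u}) (sW : W ⟶ Spec (CommRingCat.of K)),
      IrreducibleSpace W → IsReduced W → IsSeparated sW → LocallyOfFiniteType sW →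
      QuasiCompact sW →
      (∃ (x : Spec (CommRingCat.of K) ⟶ W) (U : W.Opens),
        x ≫ sW = 𝟙 (Spec (CommRingCat.of K)) ∧ IsSmooth (U.ι ≫ sW) ∧
        Set.range ⇑x.base ⊆ (U : Set W)) →
      Dense {w : W | ∃ x : Spec (CommRingCat.of K) ⟶ W,
        x ≫ sW = 𝟙 (Spec (CommRingCat.of K)) ∧ ∃ z, x.base z = w})
    (W : Scheme.{u}) (sW : W ⟶ Spec (CommRingCat.of K))
    (hsm : IsSmooth sW) (hirr : IrreducibleSpace W) (hsep : IsSeparated sW)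
    (hft : LocallyOfFiniteType sW) (hqc : QuasiCompact sW)
    (V : Scheme.{u}) (sV : V ⟶ Spec (CommRingCat.of K)) (f : V ⟶ W)
    (hf : f ≫ sW = sV) (het : IsEtale f)
    (hVpt : ∃ x : Spec (CommRingCat.of K) ⟶ V, x ≫ sV = 𝟙 (Spec (CommRingCat.of K))) :
    Dense {w : W | ∃ x : Spec (CommRingCat.of K) ⟶ V,
      x ≫ sV = 𝟙 (Spec (CommRingCat.of K)) ∧ ∃ z, (x ≫ f).base z = w} := by
  have : Smooth sW := hsm
  have : Etale f := het
  have : Smooth sV := hf ▸ inferInstanceAs (Smooth (f ≫ sW))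
  exact stmt_15_general hlarge sV f f.isOpenMap hVpt
end
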